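/- For a finite sequence a of real numbers, pan(pan(a)) = a if and only if a is a self-modified ascent sequence. -/

import Mathlib

def ascents (l : List ℕ) : ℕ :=
  ((l.zip l.tail).filter (fun p => p.1 < p.2)).length

def IsAscSeq (l : List ℕ) : Prop :=
  l.getD 0 0 = 0 ∧
  ∀ k, k < l.length → 0 < k → l.getD k 0 ≤ ascents (l.take k) + 1

def IsRGF (l : List ℕ) : Prop :=
  l.getD 0 0 = 0 ∧
  ∀ k, k < l.length → ∀ j, l.getD k 0 = j + 1 → ∃ i, i < k ∧ l.getD i 0 = j

def SelfModified (l : List ℕ) : Prop :=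
  IsAscSeq l ∧
  ∀ k, k < l.length → 0 < k →
    l.getD k 0 ≤ l.getD (k - 1) 0 ∨ l.getD k 0 = ascents (l.take k) + 1

def Contains101 (l : List ℕ) : Prop :=
  ∃ i j k, i < j ∧ j < k ∧ k < l.length ∧
    l.getD i 0 = l.getD k 0 ∧ l.getD j 0 < l.getD k 0

def Contains0101 (l : List ℕ) : Prop :=
  ∃ i j k m, i < j ∧ j < k ∧ k < m ∧ m < l.length ∧
    l.getD i 0 = l.getD k 0 ∧ l.getD j 0 = l.getD m 0 ∧ l.getD i 0 < l.getD j 0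

def Contains1010 (l : List ℕ) : Prop :=
  ∃ i j k m, i < j ∧ j < k ∧ k < m ∧ m < l.length ∧
    l.getD i 0 = l.getD k 0 ∧ l.getD j 0 = l.getD m 0 ∧ l.getD j 0 < l.getD i 0

/-- The view of position `i` in the sequence `a`: the number of indices `j > i` such
that `a j` strictly exceeds all entries `a k` for `i ≤ k < j`.  This agrees with the
recursive definition `v i = v j + 1` for `j` the least index `> i` with `a j > a i`. -/
def view {α : Type*} [LinearOrder α] [Inhabited α] (a : List α) (i : ℕ) : ℕ :=
  ((List.range a.length).filter (fun j =>
    decide (i < j ∧ ∀ k, k < j → i ≤ k → a.getD k default < a.getD j default))).length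

/-- The panorama of `a`: the views of the positions of `a`, listed grouped by entry
value from largest value to smallest, positions within a group in increasing order. -/
def pan {α : Type*} [LinearOrder α] [Inhabited α] (a : List α) : List ℕ :=
  ((List.range a.length).mergeSort (fun i j =>
    decide (a.getD j default < a.getD i default ∨
      (a.getD i default = a.getD j default ∧ i ≤ j)))).map (view a)

/-- A square matrix of natural numbers, given by a dimension and an entry function
(indices are 0-based; entries with an index `≥ d` are irrelevant/zero). -/
structure FMat where
  d : ℕ
  entry : ℕ → ℕ → ℕ

/-- 0-based index of the first row whose rightmost entry is nonzero. -/
noncomputable def mindex (M : FMat) : ℕ :=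
  sInf {i | M.entry i (M.d - 1) ≠ 0}

/-- One step of the recursive bijection from ascent sequences to Fishburn matrices,
with cases AM1, AM2, AM3 (0-based indices). -/
noncomputable def fStep (M : FMat) (a : ℕ) : FMat :=
  if a ≤ mindex M then
    -- AM1: increase entry (a, d-1)
    ⟨M.d, fun i j => M.entry i j + if i = a ∧ j = M.d - 1 then 1 else 0⟩
  else if a = M.d then
    -- AM2: append a new row and column, with 1 in the new diagonal entry
    ⟨M.d + 1, fun i j =>
      if i = M.d ∨ j = M.d then (if i = M.d ∧ j = M.d then 1 else 0)
      else M.entry i j⟩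
  else
    -- AM3: insert a new row and column at index a
    ⟨M.d + 1, fun i j =>
      if i = a then (if j = M.d then 1 else 0)
      else if j = a then (if i < a then M.entry i (M.d - 1) else 0)
      else if j = M.d ∧ i < a then 0
      else M.entry (if i < a then i else i - 1) (if j < a then j else j - 1)⟩

/-- The map from ascent sequences to Fishburn matrices. -/
noncomputable def fAM (l : List ℕ) : FMat :=
  l.tail.foldl fStep ⟨1, fun i j => if i = 0 ∧ j = 0 then 1 else 0⟩

/-- Fishburn matrix: upper triangular (and supported on `[0,d) × [0,d)`),
with no zero row and no zero column. -/
def IsFishburn (M : FMat) : Prop :=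
  (∀ i j, (M.d ≤ i ∨ M.d ≤ j ∨ j < i) → M.entry i j = 0) ∧
  (∀ i, i < M.d → ∃ j, j < M.d ∧ M.entry i j ≠ 0) ∧
  (∀ j, j < M.d → ∃ i, i < M.d ∧ M.entry i j ≠ 0)

def entrySum (M : FMat) : ℕ :=
  ∑ i ∈ Finset.range M.d, ∑ j ∈ Finset.range M.d, M.entry i j

/-- Reflection of a matrix through its antidiagonal. -/
def reflect (M : FMat) : FMat :=
  ⟨M.d, fun i j => if i < M.d ∧ j < M.d then M.entry (M.d - 1 - j) (M.d - 1 - i) else 0⟩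

/-- The canonical sequence `(0^{m₀₀}, 1^{m₁₁}, 0^{m₀₁}, 2^{m₂₂}, 1^{m₁₂}, 0^{m₀₂}, …)`
(0-based indices) associated to a matrix; this is `f_MA(M)` for `M ∈ RMatrices`. -/
def canonSeq (M : FMat) : List ℕ :=
  (List.range M.d).flatMap (fun j =>
    (List.range (j + 1)).reverse.flatMap (fun i => List.replicate (M.entry i j) i))

/-- The dual canonical sequence
`(0^{m_{d-1,d-1}}, 1^{m_{d-2,d-2}}, 0^{m_{d-2,d-1}}, …, (d-1)^{m_{0,0}}, …, 0^{m_{0,d-1}})`,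
i.e. `f_MA` applied to the antidiagonal reflection of `M`. -/
def dualCanonSeq (M : FMat) : List ℕ :=
  (List.range M.d).flatMap (fun j =>
    (List.range (j + 1)).reverse.flatMap (fun i =>
      List.replicate (M.entry (M.d - 1 - j) (M.d - 1 - i)) i))

/-- A matrix is SE-free if it has no pair of nonzero entries `m i j`, `m i' j'`
with `i < i'`, `j < j'` and `i' ≤ j`. -/
def SEFree (M : FMat) : Prop :=
  ¬ ∃ i j i' j', i < i' ∧ j < j' ∧ i' ≤ j ∧ j' < M.d ∧
    M.entry i j ≠ 0 ∧ M.entry i' j' ≠ 0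

/-- Generalized ballot sequence (Yamanouchi word): in every prefix, each value `j+1`
occurs at most as often as `j`. -/
def IsBallot (l : List ℕ) : Prop :=
  ∀ k j, (l.take k).count (j + 1) ≤ (l.take k).count j

section Records

/-- The positions counted by `view a i`: the strict left-to-right maxima of `a` after `i`,
starting from `i`. -/
def recordsFrom (a : List ℕ) (i : ℕ) : Finset ℕ :=
  {j ∈ Finset.range a.length | i < j ∧ ∀ k, k < j → i ≤ k → a.getD k 0 < a.getD j 0}

lemma mem_recordsFrom {a : List ℕ} {i j : ℕ} :
    j ∈ recordsFrom a i ↔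
      j < a.length ∧ i < j ∧ ∀ k, k < j → i ≤ k → a.getD k 0 < a.getD j 0 := by
  simp [recordsFrom]

lemma view_eq_card_recordsFrom (a : List ℕ) (i : ℕ) : view a i = (recordsFrom a i).card := rfl

lemma injOn_recordsFrom (a : List ℕ) (i : ℕ) :
    Set.InjOn (fun j => a.getD j 0) (recordsFrom a i : Set ℕ) := by
  intro j hj j' hj' h
  rw [Finset.mem_coe, mem_recordsFrom] at hj hj'
  rcases lt_trichotomy j j' with hlt | rfl | hlt
  · exact absurd h (hj'.2.2 j hlt hj.2.1.le).ne
  · rfl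
  · exact absurd h (hj.2.2 j' hlt hj'.2.1.le).ne'

lemma card_image_recordsFrom (a : List ℕ) (i : ℕ) :
    ((recordsFrom a i).image (fun j => a.getD j 0)).card = view a i :=
  Finset.card_image_of_injOn (injOn_recordsFrom a i)

lemma image_recordsFrom_subset {a : List ℕ} {m : ℕ} (hm : ∀ k < a.length, a.getD k 0 ≤ m)
    (i : ℕ) :
    (recordsFrom a i).image (fun j => a.getD j 0) ⊆ Finset.Ioc (a.getD i 0) m := by
  intro x hx
  obtain ⟨j, hj, rfl⟩ := Finset.mem_image.1 hx
  rw [mem_recordsFrom] at hj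
  exact Finset.mem_Ioc.2 ⟨hj.2.2 i hj.2.1 le_rfl, hm j hj.1⟩

lemma view_le {a : List ℕ} {m : ℕ} (hm : ∀ k < a.length, a.getD k 0 ≤ m) (i : ℕ) :
    view a i ≤ m - a.getD i 0 := by
  rw [← card_image_recordsFrom, ← Nat.card_Ioc]
  exact Finset.card_le_card (image_recordsFrom_subset hm i)

/-- If some view is as large as the maximal value `m`, then every value `k ≤ m` is attained
at a position whose view is `m - k`. -/
lemma exists_view_eq_sub {a : List ℕ} {m i : ℕ} (hm : ∀ k < a.length, a.getD k 0 ≤ m)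
    (hi : i < a.length) (hv : view a i = m) {k : ℕ} (hk : k ≤ m) :
    ∃ j < a.length, a.getD j 0 = k ∧ view a j = m - k := by
  have him := hm i hi
  have h0 : a.getD i 0 = 0 := by
    have := view_le hm i
    omega
  have himage : (recordsFrom a i).image (fun j => a.getD j 0) = Finset.Ioc 0 m := by
    have hsub := image_recordsFrom_subset hm i
    rw [h0] at hsub
    refine Finset.eq_of_subset_of_card_le hsub ?_
    rw [card_image_recordsFrom, hv, Nat.card_Ioc, Nat.sub_zero]
  rcases Nat.eq_zero_or_pos k with rfl | hpos
  · exact ⟨i, hi, h0, by simpa using hv⟩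
  · have hmem : k ∈ (recordsFrom a i).image (fun j => a.getD j 0) := by
      rw [himage]; exact Finset.mem_Ioc.2 ⟨hpos, hk⟩
    obtain ⟨j, hj, hjk⟩ := Finset.mem_image.1 hmem
    rw [mem_recordsFrom] at hj
    refine ⟨j, hj.1, hjk, le_antisymm (hjk ▸ view_le hm j) ?_⟩
    rw [← card_image_recordsFrom, ← Nat.card_Ioc]
    refine Finset.card_le_card fun x hx => ?_
    rw [Finset.mem_Ioc] at hx
    have hx' : x ∈ (recordsFrom a i).image (fun j => a.getD j 0) := by
      rw [himage]; exact Finset.mem_Ioc.2 ⟨by omega, hx.2⟩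
    obtain ⟨l, hl, rfl⟩ := Finset.mem_image.1 hx'
    rw [mem_recordsFrom] at hl
    refine Finset.mem_image.2 ⟨l, mem_recordsFrom.2 ⟨hl.1, ?_, fun q hq hjq =>
      hl.2.2 q hq (hj.2.1.le.trans hjq)⟩, rfl⟩
    by_contra hle
    rcases (not_lt.1 hle).lt_or_eq with hlt | rfl
    · have := hj.2.2 l hlt hl.2.1.le
      omega
    · omega

end Records

section Blocks

/-- `g` groups the positions of `a` into `d` consecutive blocks, block `k` having all
entries at most `k` and attaining the value `k`. -/
structure IsBlocking (a : List ℕ) (d : ℕ) (g : ℕ → ℕ) : Prop where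
  mono : ∀ p q, p ≤ q → q < a.length → g p ≤ g q
  le : ∀ p < a.length, a.getD p 0 ≤ g p
  lt : ∀ p < a.length, g p < d
  attained : ∀ k < d, ∃ p < a.length, g p = k ∧ a.getD p 0 = k

/-- Entries are weakly decreasing inside each block of `g`. -/
def AntitoneInBlocks (a : List ℕ) (g : ℕ → ℕ) : Prop :=
  ∀ p q, p < q → q < a.length → g p = g q → a.getD q 0 ≤ a.getD p 0

variable {a : List ℕ} {d : ℕ} {g : ℕ → ℕ}

lemma IsBlocking.Ioo_subset_image (h : IsBlocking a d g) {p : ℕ} (hp : p < a.length) :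
    Finset.Ioo (g p) d ⊆ (recordsFrom a p).image (fun j => a.getD j 0) := by
  classical
  intro k hk
  rw [Finset.mem_Ioo] at hk
  have hex := h.attained k hk.2
  obtain ⟨hq, hgq, haq⟩ := Nat.find_spec hex
  have hmin := fun i => @Nat.find_min _ _ hex i
  generalize Nat.find hex = q at hq hgq haq hmin
  refine Finset.mem_image.2 ⟨q, mem_recordsFrom.2 ⟨hq, ?_, fun i hiq hpi => ?_⟩, haq⟩
  · by_contra hle
    have := h.mono q p (not_lt.1 hle) hp
    omega
  · have h1 := h.mono i q hiq.le hq
    have h2 := h.le i (hiq.trans hq)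
    have h3 := hmin i hiq
    have h4 := hiq.trans hq
    by_contra hlt
    exact h3 ⟨h4, by omega, by omega⟩

lemma IsBlocking.le_view (h : IsBlocking a d g) {p : ℕ} (hp : p < a.length) :
    d - 1 - g p ≤ view a p := by
  have := Finset.card_le_card (h.Ioo_subset_image hp)
  rw [card_image_recordsFrom, Nat.card_Ioo] at this
  omega

lemma IsBlocking.view_eq (h : IsBlocking a d g) (ha : AntitoneInBlocks a g) {p : ℕ}
    (hp : p < a.length) : view a p = d - 1 - g p := by
  refine le_antisymm ?_ (h.le_view hp)
  have hsub : (recordsFrom a p).image (fun j => a.getD j 0) ⊆ Finset.Ioo (g p) d := by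
    intro x hx
    obtain ⟨j, hj, rfl⟩ := Finset.mem_image.1 hx
    obtain ⟨hjl, hpj, hrec⟩ := mem_recordsFrom.1 hj
    have h1 := hrec p hpj le_rfl
    have h2 := h.mono p j hpj.le hjl
    have h3 := h.le j hjl
    have h4 := h.lt j hjl
    have hne : g p ≠ g j := fun he => (ha p j hpj hjl he).not_gt h1
    obtain ⟨q, hq, hgq, haq⟩ := h.attained (g j) h4
    have hpq : p < q := by
      by_contra hle
      have := h.mono q p (not_lt.1 hle) hp
      omega
    have hle : g j ≤ a.getD j 0 := by
      rcases lt_trichotomy j q with hlt | rfl | hlt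
      · have := ha j q hlt hq hgq.symm
        omega
      · omega
      · have := hrec q hlt hpq.le
        omega
    exact Finset.mem_Ioo.2 ⟨by omega, by omega⟩
  have := Finset.card_le_card hsub
  rw [card_image_recordsFrom, Nat.card_Ioo] at this
  omega

lemma IsBlocking.antitoneInBlocks (h : IsBlocking a d g)
    (hv : ∀ p < a.length, view a p = d - 1 - g p) : AntitoneInBlocks a g := by
  classical
  intro p q hpq hq hg
  by_contra hlt
  have hex : ∃ j, p < j ∧ a.getD p 0 < a.getD j 0 := ⟨q, hpq, not_le.1 hlt⟩
  obtain ⟨hpj, haj⟩ := Nat.find_spec hex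
  have hmin := fun i => @Nat.find_min _ _ hex i
  have hjq : Nat.find hex ≤ q := Nat.find_min' hex ⟨hpq, not_le.1 hlt⟩
  generalize Nat.find hex = j at hpj haj hmin hjq
  have hjl := hjq.trans_lt hq
  have hrec : j ∈ recordsFrom a p := by
    refine mem_recordsFrom.2 ⟨hjl, hpj, fun k hkj hpk => ?_⟩
    rcases hpk.eq_or_lt with rfl | hpk
    · exact haj
    · have := hmin k hkj
      by_contra hle
      exact this ⟨hpk, by omega⟩
  have hgj : a.getD j 0 ≤ g p := by
    have h1 := h.le j hjl
    have h2 := h.mono j q hjq hq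
    omega
  have hp := hpq.trans hq
  have hsub : insert (a.getD j 0) (Finset.Ioo (g p) d) ⊆
      (recordsFrom a p).image (fun j => a.getD j 0) :=
    Finset.insert_subset (Finset.mem_image.2 ⟨j, hrec, rfl⟩) (h.Ioo_subset_image hp)
  have hcard := Finset.card_le_card hsub
  rw [card_image_recordsFrom, hv p hp, Finset.card_insert_of_notMem, Nat.card_Ioo] at hcard
  · omega
  · rw [Finset.mem_Ioo]
    omega

end Blocks

section Ascents

lemma ascents_eq_card (l : List ℕ) :
    ascents l =
      {i ∈ Finset.range (l.length - 1) | l.getD i 0 < l.getD (i + 1) 0}.card := by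
  have hzip : l.zip l.tail =
      (List.range (l.length - 1)).map (fun i => (l.getD i 0, l.getD (i + 1) 0)) := by
    refine List.ext_getElem (by simp) fun i h1 h2 => ?_
    simp only [List.length_map, List.length_range] at h2
    simp [List.getElem?_eq_getElem (show i < l.length by omega),
      List.getElem?_eq_getElem (show i + 1 < l.length by omega)]
  rw [ascents, hzip, List.filter_map, List.length_map]
  rfl

lemma ascents_take_succ {l : List ℕ} {p : ℕ} (hp : p + 1 < l.length) :
    ascents (l.take (p + 2)) =
      ascents (l.take (p + 1)) + if l.getD p 0 < l.getD (p + 1) 0 then 1 else 0 := by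
  have hcard : ∀ k < l.length, ascents (l.take (k + 1)) =
      {i ∈ Finset.range k | l.getD i 0 < l.getD (i + 1) 0}.card := by
    intro k hk
    rw [ascents_eq_card, List.length_take, min_eq_left (by omega), Nat.add_sub_cancel]
    congr 1
    refine Finset.filter_congr fun i hi => ?_
    rw [Finset.mem_range] at hi
    simp [show i < k + 1 by omega, hi]
  rw [hcard (p + 1) hp, hcard p (by omega), Finset.range_add_one, Finset.filter_insert]
  split_ifs
  · rw [Finset.card_insert_of_notMem (by simp)]
  · rfl

lemma ascents_take_one (l : List ℕ) : ascents (l.take 1) = 0 := by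
  rw [ascents_eq_card]
  simp

lemma SelfModified.exists_isBlocking {a : List ℕ} (h : SelfModified a) :
    ∃ d g, IsBlocking a d g ∧ AntitoneInBlocks a g := by
  obtain ⟨⟨h0, -⟩, hstep⟩ := h
  rcases Nat.eq_zero_or_pos a.length with hn | hn
  · exact ⟨0, id, ⟨by omega, by omega, by omega, by omega⟩, fun p q _ hq => by omega⟩
  set g : ℕ → ℕ := fun p => ascents (a.take (p + 1)) with hg
  have g0 : g 0 = 0 := ascents_take_one a
  have gs : ∀ p, p + 1 < a.length →
      g (p + 1) = g p + if a.getD p 0 < a.getD (p + 1) 0 then 1 else 0 :=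
    fun p hp => ascents_take_succ hp
  have hs : ∀ p, p + 1 < a.length →
      a.getD (p + 1) 0 ≤ a.getD p 0 ∨ a.getD (p + 1) 0 = g p + 1 :=
    fun p hp => hstep (p + 1) hp (by omega)
  have mono : ∀ p q, p ≤ q → q < a.length → g p ≤ g q := by
    intro p q hpq
    induction q, hpq using Nat.le_induction with
    | base => exact fun _ => le_rfl
    | succ q hpq ih =>
      intro hq
      have := gs q hq
      have := ih (by omega)
      omega
  have le : ∀ p < a.length, a.getD p 0 ≤ g p := by
    intro p
    induction p with
    | zero => intro _; omega
    | succ p ih =>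
      intro hp
      have h1 := gs p hp
      have h2 := ih (by omega)
      have h3 := hs p hp
      split_ifs at h1 <;> omega
  refine ⟨g (a.length - 1) + 1, g, ⟨mono, le, fun p hp => ?_, fun k hk => ?_⟩, ?_⟩
  · exact Nat.lt_succ_of_le (mono p _ (by omega) (by omega))
  · have hex : ∃ p, k ≤ g p := ⟨a.length - 1, by omega⟩
    classical
    have hkp := Nat.find_spec hex
    have hle : Nat.find hex ≤ a.length - 1 := Nat.find_min' hex (by omega)
    have hmin := fun i => @Nat.find_min _ _ hex i
    generalize Nat.find hex = p at hkp hle hmin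
    refine ⟨p, by omega, ?_⟩
    cases p with
    | zero => omega
    | succ p =>
      have h1 := gs p (by omega)
      have h2 := hmin p (by omega)
      have h3 := hs p (by omega)
      split_ifs at h1 <;> omega
  · intro p q hpq
    induction q, Nat.succ_le_of_lt hpq using Nat.le_induction with
    | base =>
      intro hq he
      rw [Nat.succ_eq_add_one] at hq he ⊢
      have h1 := gs p hq
      split_ifs at h1 <;> omega
    | succ q hpq' ih =>
      intro hq he
      have h1 := gs q hq
      have h2 := mono p q (by omega) (by omega)
      have h3 := ih (by omega) (by omega)
      split_ifs at h1 <;> omega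

lemma IsBlocking.selfModified {a : List ℕ} {d : ℕ} {g : ℕ → ℕ} (h : IsBlocking a d g)
    (ha : AntitoneInBlocks a g) : SelfModified a := by
  have gs : ∀ p, p + 1 < a.length →
      (a.getD (p + 1) 0 ≤ a.getD p 0 ∧ g (p + 1) = g p) ∨
      (a.getD p 0 < a.getD (p + 1) 0 ∧ a.getD (p + 1) 0 = g p + 1 ∧ g (p + 1) = g p + 1) := by
    intro p hp
    rcases (h.mono p (p + 1) (by omega) hp).eq_or_lt with he | hlt
    · exact Or.inl ⟨ha p (p + 1) (by omega) hp he, he.symm⟩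
    · have h1 := h.lt (p + 1) hp
      have h2 := h.le (p + 1) hp
      have h3 := h.le p (by omega)
      obtain ⟨q, hq, hgq, haq⟩ := h.attained (g p + 1) (by omega)
      have hpq : p + 1 ≤ q := by
        by_contra hle
        have := h.mono q p (by omega) (by omega)
        omega
      have h4 := h.mono (p + 1) q hpq hq
      rcases hpq.eq_or_lt with rfl | hlt'
      · omega
      · have := ha (p + 1) q hlt' hq (by omega)
        omega
  have g0 : 0 < a.length → g 0 = 0 := by
    intro hn
    obtain ⟨q, hq, hgq, -⟩ := h.attained 0 (by have := h.lt 0 hn; omega)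
    have := h.mono 0 q (by omega) hq
    omega
  have hasc : ∀ p < a.length, ascents (a.take (p + 1)) = g p := by
    intro p
    induction p with
    | zero => intro hn; rw [g0 hn]; exact ascents_take_one a
    | succ p ih =>
      intro hp
      have h1 := gs p hp
      rw [ascents_take_succ hp, ih (by omega)]
      split_ifs <;> omega
  refine ⟨⟨?_, fun k hk hpos => ?_⟩, fun k hk hpos => ?_⟩
  · rcases Nat.eq_zero_or_pos a.length with hn | hn
    · rw [List.length_eq_zero_iff.1 hn]; rfl
    · have := h.le 0 hn
      have := g0 hn
      omega
  · obtain ⟨p, rfl⟩ := Nat.exists_eq_succ_of_ne_zero hpos.ne'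
    rw [Nat.succ_eq_add_one, hasc p (by omega)]
    have := gs p hk
    have := h.le p (by omega)
    omega
  · obtain ⟨p, rfl⟩ := Nat.exists_eq_succ_of_ne_zero hpos.ne'
    rw [Nat.succ_eq_add_one, hasc p (by omega), Nat.add_sub_cancel]
    have := gs p hk
    omega

end Ascents

section Sorting

lemma length_pan {α : Type*} [LinearOrder α] [Inhabited α] (a : List α) :
    (pan a).length = a.length := by
  simp [pan]

/-- `σ` lists the positions of `a` by decreasing value, breaking ties by position. -/
structure IsPanSort (a : List ℕ) (σ : ℕ → ℕ) : Prop where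
  lt : ∀ s < a.length, σ s < a.length
  sorted : ∀ s t, s < t → t < a.length →
    a.getD (σ t) 0 < a.getD (σ s) 0 ∨ (a.getD (σ s) 0 = a.getD (σ t) 0 ∧ σ s < σ t)

lemma IsPanSort.injOn {a : List ℕ} {σ : ℕ → ℕ} (h : IsPanSort a σ) :
    Set.InjOn σ (Finset.range a.length : Set ℕ) := by
  intro s hs t ht he
  rw [Finset.mem_coe, Finset.mem_range] at hs ht
  rcases lt_trichotomy s t with hlt | rfl | hlt
  · have := h.sorted s t hlt ht
    rw [he] at this
    omega
  · rfl
  · have := h.sorted t s hlt hs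
    rw [he] at this
    omega

lemma IsPanSort.image_range {a : List ℕ} {σ : ℕ → ℕ} (h : IsPanSort a σ) :
    (Finset.range a.length).image σ = Finset.range a.length := by
  refine Finset.eq_of_subset_of_card_le (fun x hx => ?_) ?_
  · obtain ⟨s, hs, rfl⟩ := Finset.mem_image.1 hx
    rw [Finset.mem_range] at hs ⊢
    exact h.lt s hs
  · rw [Finset.card_image_of_injOn h.injOn]

lemma IsPanSort.surj {a : List ℕ} {σ : ℕ → ℕ} (h : IsPanSort a σ) {p : ℕ}
    (hp : p < a.length) : ∃ s < a.length, σ s = p := by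
  have : p ∈ (Finset.range a.length).image σ := by
    rw [h.image_range]; exact Finset.mem_range.2 hp
  obtain ⟨s, hs, rfl⟩ := Finset.mem_image.1 this
  exact ⟨s, Finset.mem_range.1 hs, rfl⟩

lemma IsPanSort.sum_comp {a : List ℕ} {σ : ℕ → ℕ} (h : IsPanSort a σ) (f : ℕ → ℕ) :
    ∑ s ∈ Finset.range a.length, f (σ s) = ∑ p ∈ Finset.range a.length, f p := by
  conv_rhs => rw [← h.image_range]
  rw [Finset.sum_image h.injOn]

lemma exists_isPanSort (a : List ℕ) :
    ∃ σ, IsPanSort a σ ∧ ∀ s < a.length, (pan a).getD s 0 = view a (σ s) := by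
  set r : ℕ → ℕ → Bool := fun i j =>
    decide (a.getD j default < a.getD i default ∨
      (a.getD i default = a.getD j default ∧ i ≤ j)) with hr
  set L := (List.range a.length).mergeSort r with hL
  have hperm : L.Perm (List.range a.length) := List.mergeSort_perm _ _
  have hlen : L.length = a.length := by rw [hperm.length_eq, List.length_range]
  have hnodup : L.Nodup := hperm.nodup_iff.2 List.nodup_range
  have hpair : L.Pairwise (fun i j => r i j) := by
    refine List.pairwise_mergeSort ?_ ?_ _
    · intro x y z hxy hyz
      simp only [hr, decide_eq_true_eq] at hxy hyz ⊢
      omega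
    · intro x y
      simp only [hr, Bool.or_eq_true, decide_eq_true_eq]
      omega
  have hget : ∀ s, (hs : s < a.length) → L.getD s 0 = L[s]'(hlen ▸ hs) := fun s hs => by
    simp [List.getElem?_eq_getElem (hlen ▸ hs : s < L.length)]
  refine ⟨fun s => L.getD s 0, ⟨fun s hs => ?_, fun s t hst ht => ?_⟩, fun s hs => ?_⟩
  · have hmem : L.getD s 0 ∈ L := hget s hs ▸ List.getElem_mem _
    simpa using hperm.subset hmem
  · have h1 := List.pairwise_iff_getElem.1 hpair s t (by omega) (by omega) hst
    have h2 : L[s]'(by omega) ≠ L[t]'(by omega) := fun he =>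
      hst.ne ((hnodup.getElem_inj_iff).1 he)
    simp only [hr, decide_eq_true_eq, Nat.default_eq_zero] at h1
    rw [hget s (hst.trans ht), hget t ht]
    omega
  · change (L.map (view a)).getD s 0 = view a (L.getD s 0)
    rw [hget s hs]
    simp [List.getElem?_eq_getElem (hlen ▸ hs : s < L.length)]

end Sorting

section Involution

lemma eq_self_of_strictMono_lt {n : ℕ} {τ : ℕ → ℕ} (hlt : ∀ s < n, τ s < n)
    (hmono : ∀ s t, s < t → t < n → τ s < τ t) {s : ℕ} (hs : s < n) : τ s = s := by
  have hadd : ∀ j k, k + j < n → τ k + j ≤ τ (k + j) := by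
    intro j
    induction j with
    | zero => intro k _; rfl
    | succ j ih =>
      intro k hk
      have h1 := ih k (by omega)
      have h2 := hmono (k + j) (k + (j + 1)) (by omega) hk
      omega
  have h1 := hadd s 0 (by omega)
  have h2 := hadd (n - 1 - s) s (by omega)
  have h3 := hlt (s + (n - 1 - s)) (by omega)
  rw [Nat.zero_add] at h1
  omega

lemma ext_getD_zero {a b : List ℕ} (hlen : a.length = b.length)
    (h : ∀ s < b.length, a.getD s 0 = b.getD s 0) : a = b := by
  refine List.ext_getElem hlen fun s h1 h2 => ?_
  simpa [List.getElem?_eq_getElem h1, List.getElem?_eq_getElem h2] using h s h2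

/-- Reflection: the panorama of a blocked sequence is blocked by the reflected values. -/
lemma IsBlocking.pan {a : List ℕ} {d : ℕ} {g σ : ℕ → ℕ} (h : IsBlocking a d g)
    (ha : AntitoneInBlocks a g) (hσ : IsPanSort a σ)
    (hpan : ∀ s < a.length, (pan a).getD s 0 = view a (σ s)) :
    IsBlocking (pan a) d (fun s => d - 1 - a.getD (σ s) 0) ∧
      AntitoneInBlocks (pan a) (fun s => d - 1 - a.getD (σ s) 0) := by
  have hc : ∀ s < a.length, (_root_.pan a).getD s 0 = d - 1 - g (σ s) := fun s hs => by
    rw [hpan s hs, h.view_eq ha (hσ.lt s hs)]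
  have hle : ∀ s < a.length, a.getD (σ s) 0 ≤ g (σ s) ∧ g (σ s) < d := fun s hs =>
    ⟨h.le _ (hσ.lt s hs), h.lt _ (hσ.lt s hs)⟩
  constructor
  · refine ⟨fun p q hpq hq => ?_, fun p hp => ?_, fun p hp => ?_, fun k hk => ?_⟩
    · rw [length_pan] at hq
      rcases hpq.eq_or_lt with rfl | hlt
      · rfl
      · have := hσ.sorted p q hlt hq
        omega
    · rw [length_pan] at hp
      have := hle p hp
      rw [hc p hp]
      omega
    · rw [length_pan] at hp
      have := hle p hp
      omega
    · obtain ⟨p, hp, hgp, hap⟩ := h.attained (d - 1 - k) (by omega)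
      obtain ⟨s, hs, rfl⟩ := hσ.surj hp
      refine ⟨s, by rwa [length_pan], ?_, ?_⟩
      · omega
      · rw [hc s hs]
        omega
  · intro p q hpq hq he
    rw [length_pan] at hq
    have h1 := hσ.sorted p q hpq hq
    have h2 := hle p (hpq.trans hq)
    have h3 := hle q hq
    dsimp only at he
    have h4 := h.mono (σ p) (σ q) (by omega) (hσ.lt q hq)
    rw [hc q hq, hc p (hpq.trans hq)]
    omega

lemma IsBlocking.pan_pan {a : List ℕ} {d : ℕ} {g : ℕ → ℕ} (h : IsBlocking a d g)
    (ha : AntitoneInBlocks a g) : _root_.pan (_root_.pan a) = a := by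
  obtain ⟨σ, hσ, hpan⟩ := exists_isPanSort a
  obtain ⟨hb, hba⟩ := h.pan ha hσ hpan
  obtain ⟨τ, hτ, hpan'⟩ := exists_isPanSort (_root_.pan a)
  have hτlt := hτ.lt
  have hτs := hτ.sorted
  rw [length_pan] at hτlt hτs hpan'
  have hid : ∀ s < a.length, σ (τ s) = s := by
    refine fun s hs => eq_self_of_strictMono_lt (τ := fun s => σ (τ s))
      (fun s hs => hσ.lt _ (hτlt s hs)) (fun s t hst ht => ?_) hs
    have hs' := hτlt s (hst.trans ht)
    have ht' := hτlt t ht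
    have h1 := hτs s t hst ht
    rw [hpan _ hs', hpan _ ht', h.view_eq ha (hσ.lt _ hs'), h.view_eq ha (hσ.lt _ ht')] at h1
    have h2 := h.lt _ (hσ.lt _ hs')
    have h3 := h.lt _ (hσ.lt _ ht')
    by_contra hle
    have h4 := h.mono _ _ (not_lt.1 hle) (hσ.lt _ hs')
    rcases h1 with h1 | ⟨h1, hlt⟩
    · omega
    · have h5 := hσ.sorted _ _ hlt ht'
      have h6 : σ (τ t) < σ (τ s) := by
        rcases (not_lt.1 hle).eq_or_lt with he | hlt'
        · rw [he] at h5
          omega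
        · exact hlt'
      have h7 := ha _ _ h6 (hσ.lt _ hs') (by omega)
      omega
  refine ext_getD_zero (by rw [length_pan, length_pan]) fun s hs => ?_
  have h1 := hτlt s hs
  rw [hpan' s hs, hb.view_eq hba (by rwa [length_pan]), hid s hs]
  have h2 := h.le s hs
  have h3 := h.lt s hs
  omega

end Involution

section FixedPoints

lemma exists_max_getD {a : List ℕ} (hn : 0 < a.length) :
    ∃ p < a.length, ∀ k < a.length, a.getD k 0 ≤ a.getD p 0 := by
  obtain ⟨p, hp, hmax⟩ := Finset.exists_max_image (Finset.range a.length)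
    (fun k => a.getD k 0) ⟨0, Finset.mem_range.2 hn⟩
  exact ⟨p, Finset.mem_range.1 hp, fun k hk => hmax k (Finset.mem_range.2 hk)⟩

lemma getD_pan_le {a : List ℕ} {m : ℕ} (hm : ∀ k < a.length, a.getD k 0 ≤ m) :
    ∀ s < (pan a).length, (pan a).getD s 0 ≤ m := by
  intro s hs
  rw [length_pan] at hs
  obtain ⟨σ, -, hpan⟩ := exists_isPanSort a
  rw [hpan s hs]
  exact (view_le hm _).trans (Nat.sub_le _ _)

lemma exists_isBlocking_of_pan_pan {a : List ℕ} (h : pan (pan a) = a) :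
    ∃ d g, IsBlocking a d g ∧ AntitoneInBlocks a g := by
  rcases Nat.eq_zero_or_pos a.length with hn | hn
  · exact ⟨0, id, ⟨by omega, by omega, by omega, by omega⟩, fun p q _ hq => by omega⟩
  obtain ⟨p₀, hp₀, hmax⟩ := exists_max_getD hn
  generalize hm : a.getD p₀ 0 = m at hmax
  have hbmax := getD_pan_le hmax
  obtain ⟨ρ, hρ, hρpan⟩ := exists_isPanSort a
  obtain ⟨σ, hσ, hpan⟩ := exists_isPanSort (pan a)
  have hσlt := hσ.lt
  have hσs := hσ.sorted
  have hσsum := hσ.sum_comp (fun q => (pan a).getD q 0)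
  rw [h] at hpan
  rw [length_pan] at hσlt hσs hσsum hpan hbmax
  have hle : ∀ s < a.length, a.getD s 0 ≤ m - (pan a).getD (σ s) 0 := fun s hs => by
    rw [hpan s hs]
    exact view_le (by rwa [length_pan]) _
  have hblock : IsBlocking a (m + 1) (fun s => m - (pan a).getD (σ s) 0) := by
    refine ⟨fun p q hpq hq => ?_, hle, fun p hp => ?_, fun k hk => ?_⟩
    · rcases hpq.eq_or_lt with rfl | hlt
      · rfl
      · have := hσs p q hlt hq
        omega
    · omega
    · obtain ⟨j, hj, hjk, hvj⟩ := exists_view_eq_sub (a := pan a) (m := m) (i := σ p₀)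
        (by rwa [length_pan]) (by rw [length_pan]; exact hσlt _ hp₀)
        (by rw [← hpan _ hp₀, hm]) (Nat.sub_le m k)
      obtain ⟨s, hs, rfl⟩ := hσ.surj hj
      rw [length_pan] at hs
      refine ⟨s, hs, ?_, ?_⟩
      · omega
      · rw [hpan s hs]
        omega
  refine ⟨m + 1, _, hblock, hblock.antitoneInBlocks ?_⟩
  have hsub : ∀ s < a.length,
      m + 1 - 1 - (m - (pan a).getD (σ s) 0) = (pan a).getD (σ s) 0 := fun s hs => by
    have := hbmax _ (hσlt s hs)
    omega
  have hsum : ∑ s ∈ Finset.range a.length, (pan a).getD (σ s) 0 =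
      ∑ s ∈ Finset.range a.length, view a s := by
    rw [hσsum, ← hρ.sum_comp (view a)]
    exact Finset.sum_congr rfl fun s hs => hρpan s (Finset.mem_range.1 hs)
  have heq := (Finset.sum_eq_sum_iff_of_le (fun s hs => by
    have := hblock.le_view (Finset.mem_range.1 hs)
    rwa [hsub s (Finset.mem_range.1 hs)] at this)).1 hsum
  intro p hp
  rw [hsub p hp, heq p (Finset.mem_range.2 hp)]

end FixedPoints

theorem pan_pan_eq_self_iff (a : List ℕ) : pan (pan a) = a ↔ SelfModified a := by
  constructor
  · intro h
    obtain ⟨d, g, hb, ha⟩ := exists_isBlocking_of_pan_pan h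
    exact hb.selfModified ha
  · intro h
    obtain ⟨d, g, hb, ha⟩ := h.exists_isBlocking
    exact hb.pan_pan ha

lemma pan_map_natCast (a : List ℕ) : pan (a.map (Nat.cast : ℕ → ℝ)) = pan a := by
  have hget : ∀ i, (a.map (Nat.cast : ℕ → ℝ)).getD i default = (a.getD i default : ℕ) := by
    intro i
    have h0 : (default : ℝ) = ((default : ℕ) : ℝ) := by
      rw [Nat.default_eq_zero, Nat.cast_zero]; rfl
    rw [h0]
    exact List.getD_map _ _ _
  have hview : view (a.map (Nat.cast : ℕ → ℝ)) = view a := by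
    funext i
    simp only [view, hget, Nat.cast_lt, List.length_map]
  simp only [pan, hget, hview, Nat.cast_lt, Nat.cast_inj, List.length_map]

theorem pan_pan_eq_iff_selfModified (a : List ℝ) :
    (pan (pan a)).map (fun n => (n : ℝ)) = a ↔
    ∃ b : List ℕ, SelfModified b ∧ a = b.map (fun n => (n : ℝ)) := by
  have hcast : ∀ b : List ℕ, b.map (fun n => (n : ℝ)) = List.map (Nat.cast : ℕ → ℝ) b := by
    intro b
    simp [List.map_eq_flatMap]
  simp only [hcast]
  constructor
  · intro h
    refine ⟨pan (pan a), (pan_pan_eq_self_iff _).1 ?_, h.symm⟩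
    conv_rhs => rw [← h, pan_map_natCast]
  · rintro ⟨b, hb, rfl⟩
    rw [pan_map_natCast, (pan_pan_eq_self_iff b).2 hb]
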